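/- Let X be a periodic simple graph with free Γ-action and finite quotient, N_m = Σ_{[C]_Γ ∈ [Red_m]_Γ} ν(C) where ν(C) = |C|/|Γ_C| for prime C (extended to powers by ν(D^k)=ν(D)). Then N_m = Tr_Γ(A_m) - t_m, i.e., N_m equals the number of reduced closed paths of length m whose origin lies in the fundamental domain F. -/

import Mathlib

/-- A path `(f 0, f 1, …, f m)` in a simple graph is proper if consecutive vertices are
adjacent and it has no backtracking. -/
def IsProperPath {V : Type*} (G : SimpleGraph V) (m : ℕ) (f : ℕ → V) : Prop :=
  (∀ i, i < m → G.Adj (f i) (f (i + 1))) ∧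
  (∀ i, 1 ≤ i → i + 1 ≤ m → f (i - 1) ≠ f (i + 1))

/-- A closed path `(f 0, …, f m = f 0)` has a tail if there is `k` with
`1 ≤ k ≤ ⌊m/2⌋ - 1` such that `f j = f (m - j)` for `j = 1, …, k`. -/
def HasTail {V : Type*} (m : ℕ) (f : ℕ → V) : Prop :=
  ∃ k, 1 ≤ k ∧ k ≤ m / 2 - 1 ∧ ∀ j, 1 ≤ j → j ≤ k → f j = f (m - j)

/-- `pathCount G m x y` = `A_m(x,y)`, the number of proper paths of length `m`
from `x` to `y`. -/
noncomputable def pathCount {V : Type*} (G : SimpleGraph V) (m : ℕ) (x y : V) : ℕ :=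
  Nat.card {f : ℕ → V //
    IsProperPath G m f ∧ f 0 = x ∧ f m = y ∧ ∀ i, m ≤ i → f i = y}

/-- `t_m`: the number of proper closed paths of length `m` with a tail starting in `F`. -/
noncomputable def tailCount {V : Type*} (G : SimpleGraph V) (F : Finset V) (m : ℕ) : ℕ :=
  ∑ x ∈ F, Nat.card {f : ℕ → V //
    IsProperPath G m f ∧ f 0 = x ∧ f m = x ∧ HasTail m f ∧ ∀ i, m ≤ i → f i = x}

/-- A reduced closed path of length `m`, written cyclically. -/
def IsReducedCycle {V : Type*} (G : SimpleGraph V) (m : ℕ) (C : ZMod m → V) : Prop :=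
  (∀ j, G.Adj (C j) (C (j + 1))) ∧ ∀ j, C (j + 2) ≠ C j

/-- The least (positive) period of a cyclic path: the length of the underlying prime cycle. -/
noncomputable def leastPeriod {V : Type*} (m : ℕ) (C : ZMod m → V) : ℕ :=
  sInf {ℓ : ℕ | 0 < ℓ ∧ ∀ j, C (j + (ℓ : ZMod m)) = C j}

/-- `ν(C) = |D| / |Γ_C|` where `D` is the prime cycle underlying `C` (so `|D|` is the least
period of `C`) and `Γ_C` is the stabilizer of the cycle `C` in `Γ`. -/
noncomputable def nu {V : Type*} (Γ : Type*) [Group Γ] [MulAction Γ V]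
    (m : ℕ) (C : ZMod m → V) : ℚ :=
  (leastPeriod m C : ℚ) /
    (Nat.card {γ : Γ | ∃ p : ZMod m, ∀ j, γ • C j = C (j - p)} : ℚ)

/-- `Γ`-equivalence of reduced cycles: `C ∼_Γ D` iff `D` is obtained from `C` by applying
some `γ ∈ Γ` and shifting the origin. -/
def cycRel {V : Type*} (Γ : Type*) [Group Γ] [MulAction Γ V] (G : SimpleGraph V) (m : ℕ)
    (C D : {C : ZMod m → V // IsReducedCycle G m C}) : Prop :=
  ∃ γ : Γ, ∃ k : ZMod m, ∀ j, D.1 j = γ • C.1 (j + k)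

/-!
Unrolling a cyclic path at its origin identifies the reduced closed paths with origin in `F` with
the proper closed paths starting in `F` that have no tail, and `Tr_Γ(A_m) - t_m` counts the latter.

To count them by `Γ`-classes of cycles, let `K = Γ × ℤ/m` act on cyclic paths, so that the classes
are the `K`-orbits. For each shift of the origin of `C`, exactly one `γ ∈ Γ` brings the new origin
into `F`. Hence exactly `m` elements of `K` carry `C` to a path with origin in `F`, and the orbit of
`C` contains `m / |K_C|` such paths. The projection of the stabilizer `K_C` to `Γ` has image `Γ_C`
and its kernel is the group of periods of `C`, of order `m / |D|` if `D` is the prime cycle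
underlying `C`. Therefore `m / |K_C| = |D| / |Γ_C| = ν(C)`.
-/

/-! ### Orbit counting -/

section Counting

lemma finsum_natCard_fiber {α β R : Type*} [Finite α] [NonAssocSemiring R] (f : α → β) :
    ∑ᶠ b, (Nat.card {a // f a = b} : R) = Nat.card α := by
  classical
  have := Fintype.ofFinite α
  have hsupp : (Function.support fun b => (Nat.card {a // f a = b} : R)) ⊆
      (Finset.univ.image f : Finset β) := by
    intro b hb
    by_contra hrange
    have : IsEmpty {a // f a = b} := ⟨fun a => hrange (by simp [← a.2])⟩
    exact hb (by simp)
  rw [finsum_eq_sum_of_support_subset _ hsupp, Nat.card_eq_fintype_card, ← Finset.card_univ,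
    Finset.card_eq_sum_card_image f, Nat.cast_sum]
  simp only [Nat.card_eq_fintype_card, Fintype.card_subtype]

lemma ncard_inter_orbit_mul_card_stabilizer {K X : Type*} [Group K] [MulAction K X]
    (S : Set X) (x : X) :
    (S ∩ MulAction.orbit K x).ncard * Nat.card (MulAction.stabilizer K x) =
      Nat.card {g : K // g • x ∈ S} := by
  let T : Set (K ⧸ MulAction.stabilizer K x) := MulAction.ofQuotientStabilizer K x ⁻¹' S
  have himage : MulAction.ofQuotientStabilizer K x '' T = S ∩ MulAction.orbit K x := by
    have hrange : Set.range (MulAction.ofQuotientStabilizer K x) = MulAction.orbit K x :=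
      (QuotientGroup.mk_surjective.range_comp _).symm
    rw [Set.image_preimage_eq_inter_range, hrange]
  rw [← himage, Set.ncard_image_of_injective _ (MulAction.injective_ofQuotientStabilizer K x),
    ← Nat.card_coe_set_eq, mul_comm, ← Nat.card_prod]
  exact (Nat.card_congr (QuotientGroup.preimageMkEquivSubgroupProdSet _ T)).symm

lemma card_map_fst_mul_card_comap_inr {M N : Type*} [Group M] [Group N]
    (H : Subgroup (M × N)) :
    Nat.card (H.map (MonoidHom.fst M N)) * Nat.card (H.comap (MonoidHom.inr M N)) =
      Nat.card H := by
  let f : H →* M := (MonoidHom.fst M N).comp H.subtype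
  have hrange : f.range = H.map (MonoidHom.fst M N) := by
    rw [MonoidHom.range_comp, H.range_subtype]
  have hker : H.comap (MonoidHom.inr M N) ≃ f.ker :=
    { toFun := fun n => ⟨⟨(1, n.1), n.2⟩, rfl⟩
      invFun := fun h => ⟨h.1.1.2, by
        have hfst : h.1.1.1 = 1 := h.2
        simpa only [Subgroup.mem_comap, MonoidHom.inr_apply, ← hfst] using h.1.2⟩
      left_inv := fun _ => rfl
      right_inv := fun h => Subtype.ext (Subtype.ext (Prod.ext (Eq.symm h.2) rfl)) }
  rw [← hrange, ← Subgroup.index_ker, Nat.card_congr hker, Subgroup.index_mul_card]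

lemma index_eq_sInf_pow_mem {A : Type*} [CommGroup A] {a : A}
    (ha : ∀ x, x ∈ Subgroup.zpowers a) (P : Subgroup A) :
    P.index = sInf {n : ℕ | 0 < n ∧ a ^ n ∈ P} := by
  have hgen : ∀ x : A ⧸ P, x ∈ Subgroup.zpowers (a : A ⧸ P) := by
    intro x
    obtain ⟨y, rfl⟩ := QuotientGroup.mk_surjective x
    obtain ⟨k, rfl⟩ := ha y
    exact ⟨k, rfl⟩
  rw [Subgroup.index, ← orderOf_eq_card_of_forall_mem_zpowers hgen, orderOf,
    Function.minimalPeriod_eq_sInf_n_pos_IsPeriodicPt]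
  congr 1
  ext n
  simp only [gt_iff_lt, Set.mem_ofPred_eq, isPeriodicPt_mul_iff_pow_eq_one,
    ← QuotientGroup.mk_pow, QuotientGroup.eq_one_iff]

lemma existsUnique_smul_mem {Γ V : Type*} [Group Γ] [MulAction Γ V] {F : Set V}
    (hfree : ∀ (g : Γ) (x : V), g • x = x → g = 1)
    (hF : ∀ x : V, ∃! y, y ∈ F ∧ ∃ g : Γ, g • y = x) (x : V) : ∃! g : Γ, g • x ∈ F := by
  obtain ⟨y, ⟨hy, g, rfl⟩, huniq⟩ := hF x
  refine ⟨g⁻¹, by simpa only [inv_smul_smul] using hy, fun h hh => ?_⟩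
  have hfix : (h * g) • y = y := by
    rw [mul_smul]
    exact huniq _ ⟨hh, h⁻¹, inv_smul_smul _ _⟩
  exact eq_inv_of_mul_eq_one_left (hfree _ _ hfix)

end Counting

/-! ### Closed paths and cycles -/

section ClosedPaths

variable {V : Type*} {G : SimpleGraph V} {m : ℕ}

/-- The closed path `C 0, C 1, …, C m = C 0` traced by a cyclic path, continued by the constant
`C m` as in `pathCount`. -/
def unroll (m : ℕ) (C : ZMod m → V) (i : ℕ) : V :=
  C (min i m : ℕ)

/-- The closed paths of length `m` at `x` counted by `pathCount G m x x`. -/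
def closedPaths (G : SimpleGraph V) (m : ℕ) (x : V) : Set (ℕ → V) :=
  {f | IsProperPath G m f ∧ f 0 = x ∧ f m = x ∧ ∀ i, m ≤ i → f i = x}

/-- The reduced closed paths of length `m` whose origin lies in `F`. Unlike cycles, they are not
considered up to a change of origin. -/
def reducedPathsFrom (G : SimpleGraph V) (m : ℕ) (F : Set V) : Set (ZMod m → V) :=
  {C | IsReducedCycle G m C ∧ C 0 ∈ F}

lemma unroll_of_le {C : ZMod m → V} {i : ℕ} (hi : i ≤ m) : unroll m C i = C i := by
  rw [unroll, min_eq_left hi]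

lemma unroll_of_ge {C : ZMod m → V} {i : ℕ} (hi : m ≤ i) : unroll m C i = C 0 := by
  rw [unroll, min_eq_right hi, ZMod.natCast_self]

lemma unroll_injective [NeZero m] : Function.Injective (unroll (V := V) m) := by
  intro C D h
  funext j
  simpa only [unroll_of_le (ZMod.val_le j), ZMod.natCast_zmod_val] using congrFun h j.val

lemma exists_unroll_eq [NeZero m] {f : ℕ → V} (hf : ∀ i, m ≤ i → f i = f 0) :
    ∃ C : ZMod m → V, unroll m C = f := by
  refine ⟨fun j => f j.val, funext fun i => ?_⟩
  rcases lt_or_ge i m with hi | hi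
  · rw [unroll_of_le hi.le, ZMod.val_cast_of_lt hi]
  · rw [unroll_of_ge hi, ZMod.val_zero, hf i hi]

lemma hasTail_iff_apply_one_eq {f : ℕ → V} (hm : 1 ≤ m) (hf : IsProperPath G m f)
    (hclosed : f m = f 0) : HasTail m f ↔ f 1 = f (m - 1) := by
  refine ⟨fun ⟨_, hk, _, h⟩ => h 1 le_rfl hk, fun h => ?_⟩
  -- In length at most 3 the definition leaves no room for a tail, but then `f 1 ≠ f (m - 1)`.
  have hm4 : 4 ≤ m := by
    by_contra! hlt
    interval_cases m
    · exact (hf.1 0 (by lia)).ne h.symm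
    · exact hf.2 1 le_rfl le_rfl hclosed.symm
    · exact (hf.1 1 (by lia)).ne h
  refine ⟨1, le_rfl, by lia, fun j h1 h2 => ?_⟩
  rwa [le_antisymm h2 h1]

lemma forall_zmod_iff_forall_lt [NeZero m] {P : ZMod m → Prop} :
    (∀ j, P j) ↔ ∀ i < m, P (i : ℕ) :=
  ⟨fun h i _ => h i, fun h j => by simpa only [ZMod.natCast_zmod_val] using h _ j.val_lt⟩

-- The last inequality is the condition at `j = -1`: no backtracking at the origin.
lemma forall_apply_add_two_ne_iff_unroll [NeZero m] {C : ZMod m → V} :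
    (∀ j, C (j + 2) ≠ C j) ↔
      (∀ i, 1 ≤ i → i + 1 ≤ m → unroll m C (i - 1) ≠ unroll m C (i + 1)) ∧
        unroll m C 1 ≠ unroll m C (m - 1) := by
  have hm : 1 ≤ m := NeZero.one_le
  have hlast : ((m - 1 : ℕ) : ZMod m) + 2 = (1 : ℕ) := by
    rw [Nat.cast_pred hm, ZMod.natCast_self]
    norm_num
  rw [forall_zmod_iff_forall_lt]
  constructor
  · refine fun h => ⟨fun i h1 h2 => ?_, ?_⟩
    · obtain ⟨k, rfl⟩ := Nat.exists_eq_add_of_le' h1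
      rw [unroll_of_le (by lia), unroll_of_le h2]
      simpa [add_assoc, one_add_one_eq_two] using (h k (by lia)).symm
    · rw [unroll_of_le hm, unroll_of_le (by lia), ← hlast]
      exact h _ (by lia)
  · rintro ⟨hmid, hend⟩ i hi
    rcases (Nat.le_sub_one_of_lt hi).lt_or_eq with hi' | rfl
    · have hne := hmid (i + 1) (by lia) (by lia)
      rw [unroll_of_le (by lia), unroll_of_le (by lia)] at hne
      simpa [add_assoc, one_add_one_eq_two] using hne.symm
    · rwa [unroll_of_le hm, unroll_of_le (by lia), ← hlast] at hend

lemma isReducedCycle_iff_unroll [NeZero m] {C : ZMod m → V} :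
    IsReducedCycle G m C ↔ IsProperPath G m (unroll m C) ∧ ¬ HasTail m (unroll m C) := by
  have hadj : (∀ j, G.Adj (C j) (C (j + 1))) ↔
      ∀ i, i < m → G.Adj (unroll m C i) (unroll m C (i + 1)) := by
    rw [forall_zmod_iff_forall_lt]
    refine forall₂_congr fun i hi => ?_
    rw [unroll_of_le hi.le, unroll_of_le hi, Nat.cast_succ]
  rw [IsReducedCycle, hadj, forall_apply_add_two_ne_iff_unroll, ← and_assoc]
  refine and_congr_right fun hproper =>
    not_congr (hasTail_iff_apply_one_eq NeZero.one_le hproper ?_).symm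
  rw [unroll_of_ge le_rfl, unroll_of_le (Nat.zero_le m), Nat.cast_zero]

lemma image_unroll_reducedPathsFrom [NeZero m] (x : V) :
    unroll m '' reducedPathsFrom G m {x} = closedPaths G m x \ {f | HasTail m f} := by
  ext f
  constructor
  · rintro ⟨C, ⟨hC, rfl : C 0 = x⟩, rfl⟩
    obtain ⟨hproper, htail⟩ := isReducedCycle_iff_unroll.1 hC
    exact ⟨⟨hproper, by simp [unroll_of_le], unroll_of_ge le_rfl, fun i => unroll_of_ge⟩, htail⟩
  · rintro ⟨⟨hproper, rfl, -, hconst⟩, htail⟩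
    obtain ⟨C, rfl⟩ := exists_unroll_eq hconst
    exact ⟨C, ⟨isReducedCycle_iff_unroll.2 ⟨hproper, htail⟩, by simp [unroll_of_le]⟩, rfl⟩

lemma finite_setOf_walks (hfin : ∀ v, (G.neighborSet v).Finite) (m : ℕ) (x y : V) :
    {f : ℕ → V | (∀ i < m, G.Adj (f i) (f (i + 1))) ∧ f 0 = x ∧ ∀ i, m ≤ i → f i = y}.Finite := by
  induction m generalizing x with
  | zero =>
    refine (Set.finite_singleton fun _ => y).subset fun f hf => ?_
    exact funext fun i => hf.2.2 i i.zero_le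
  | succ m ih =>
    refine ((hfin x).biUnion fun v _ => (ih v).image
      fun f i => Nat.casesOn (motive := fun _ => V) i x f).subset ?_
    rintro f ⟨hadj, rfl, hconst⟩
    refine Set.mem_biUnion (hadj 0 m.succ_pos) ⟨fun i => f (i + 1), ⟨fun i hi => ?_, rfl, ?_⟩, ?_⟩
    · exact hadj (i + 1) (Nat.succ_lt_succ hi)
    · exact fun i hi => hconst (i + 1) (Nat.succ_le_succ hi)
    · exact funext fun i => by cases i <;> rfl

lemma finite_closedPaths (hfin : ∀ v, (G.neighborSet v).Finite) (m : ℕ) (x : V) :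
    (closedPaths G m x).Finite :=
  (finite_setOf_walks hfin m x x).subset fun _ hf => ⟨hf.1.1, hf.2.1, hf.2.2.2⟩

lemma finite_reducedPathsFrom_singleton [NeZero m] (hfin : ∀ v, (G.neighborSet v).Finite) (x : V) :
    (reducedPathsFrom G m {x}).Finite := by
  refine Set.Finite.of_finite_image ?_ unroll_injective.injOn
  rw [image_unroll_reducedPathsFrom]
  exact (finite_closedPaths hfin m x).sdiff

lemma tailCount_eq_sum_ncard (F : Finset V) :
    tailCount G F m = ∑ x ∈ F, (closedPaths G m x ∩ {f | HasTail m f}).ncard := by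
  refine Finset.sum_congr rfl fun x _ => ?_
  rw [← Nat.card_coe_set_eq]
  refine Nat.card_congr (Equiv.subtypeEquivRight fun f => ?_)
  simp only [closedPaths, Set.mem_inter_iff, Set.mem_ofPred_eq]
  tauto

lemma pathCount_self_eq_add [NeZero m] (hfin : ∀ v, (G.neighborSet v).Finite) (x : V) :
    pathCount G m x x =
      (closedPaths G m x ∩ {f | HasTail m f}).ncard + (reducedPathsFrom G m {x}).ncard := by
  rw [← Set.ncard_image_of_injective _ unroll_injective, image_unroll_reducedPathsFrom,
    Set.ncard_inter_add_ncard_sdiff_eq_ncard _ _ (finite_closedPaths hfin m x)]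
  rfl

lemma reducedPathsFrom_eq_biUnion (F : Set V) :
    reducedPathsFrom G m F = ⋃ x ∈ F, reducedPathsFrom G m {x} := by
  ext C
  simp [reducedPathsFrom]

lemma finite_reducedPathsFrom [NeZero m] (hfin : ∀ v, (G.neighborSet v).Finite) (F : Finset V) :
    (reducedPathsFrom G m F).Finite := by
  rw [reducedPathsFrom_eq_biUnion]
  exact F.finite_toSet.biUnion fun x _ => finite_reducedPathsFrom_singleton hfin x

lemma ncard_reducedPathsFrom_eq_sum [NeZero m] (hfin : ∀ v, (G.neighborSet v).Finite)
    (F : Finset V) :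
    (reducedPathsFrom G m F).ncard = ∑ x ∈ F, (reducedPathsFrom G m {x}).ncard := by
  have hdisj : (F : Set V).PairwiseDisjoint fun x => reducedPathsFrom G m {x} :=
    fun x _ y _ hxy => Set.disjoint_left.2 fun C hx hy => hxy (hx.2.symm.trans hy.2)
  rw [reducedPathsFrom_eq_biUnion, F.finite_toSet.ncard_biUnion
    (fun x _ => finite_reducedPathsFrom_singleton hfin x) hdisj]
  exact finsum_mem_coe_finset _ _

lemma ncard_reducedPathsFrom_add_tailCount [NeZero m] (hfin : ∀ v, (G.neighborSet v).Finite)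
    (F : Finset V) :
    (reducedPathsFrom G m F).ncard + tailCount G F m = ∑ x ∈ F, pathCount G m x x := by
  rw [ncard_reducedPathsFrom_eq_sum hfin, tailCount_eq_sum_ncard, add_comm,
    ← Finset.sum_add_distrib]
  exact Finset.sum_congr rfl fun x _ => (pathCount_self_eq_add hfin x).symm

end ClosedPaths

/-! ### The action on cyclic paths -/

section CycleAction

variable {V Γ : Type*} [Group Γ] [MulAction Γ V] {G : SimpleGraph V} {m : ℕ}

/-- The group acting on cyclic paths of length `m` by moving the vertices and shifting the origin.
The shifts are written multiplicatively so that the product with `Γ` is a group. -/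
abbrev CycleSymmetry (Γ : Type*) (m : ℕ) : Type _ :=
  Γ × Multiplicative (ZMod m)

/-- The action on cyclic paths for which `cycRel` is the orbit relation. -/
@[reducible]
def cycleAction (Γ V : Type*) [Group Γ] [MulAction Γ V] (m : ℕ) :
    MulAction (CycleSymmetry Γ m) (ZMod m → V) where
  smul g C j := g.1 • C (j + g.2.toAdd)
  one_smul C := funext fun j => by
    change (1 : Γ) • C (j + 0) = C j
    rw [one_smul, add_zero]
  mul_smul g h C := funext fun j => by
    change (g.1 * h.1) • C (j + (g.2.toAdd + h.2.toAdd)) = g.1 • h.1 • C (j + g.2.toAdd + h.2.toAdd)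
    rw [mul_smul, add_assoc]

attribute [local instance] cycleAction

lemma cycleAction_smul_apply (g : CycleSymmetry Γ m) (C : ZMod m → V) (j : ZMod m) :
    (g • C) j = g.1 • C (j + g.2.toAdd) :=
  rfl

lemma cycRel_iff_mem_orbit {C D : {C : ZMod m → V // IsReducedCycle G m C}} :
    cycRel Γ G m C D ↔ D.1 ∈ MulAction.orbit (CycleSymmetry Γ m) C.1 := by
  constructor
  · rintro ⟨γ, k, h⟩
    exact ⟨(γ, .ofAdd k), funext fun j => (h j).symm⟩
  · rintro ⟨g, h⟩
    exact ⟨g.1, g.2.toAdd, fun j => congrFun h.symm j⟩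

lemma quot_mk_cycRel_eq_iff {C D : {C : ZMod m → V // IsReducedCycle G m C}} :
    Quot.mk (cycRel Γ G m) C = Quot.mk _ D ↔ cycRel Γ G m C D := by
  have hequiv : Equivalence (cycRel Γ G m) :=
    ⟨fun _ => cycRel_iff_mem_orbit.2 (MulAction.mem_orbit_self _),
      fun h => cycRel_iff_mem_orbit.2 (MulAction.mem_orbit_symm.1 (cycRel_iff_mem_orbit.1 h)),
      fun h h' => cycRel_iff_mem_orbit.2
        (MulAction.orbit_eq_iff.2 (cycRel_iff_mem_orbit.1 h) ▸ cycRel_iff_mem_orbit.1 h')⟩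
  rw [Quot.eq, hequiv.eqvGen_iff]

lemma IsReducedCycle.smul
    (hauto : ∀ (g : Γ) (x y : V), G.Adj (g • x) (g • y) ↔ G.Adj x y)
    {C : ZMod m → V} (hC : IsReducedCycle G m C) (g : CycleSymmetry Γ m) :
    IsReducedCycle G m (g • C) := by
  refine ⟨fun j => ?_, fun j => ?_⟩
  · rw [cycleAction_smul_apply, cycleAction_smul_apply, hauto, add_right_comm]
    exact hC.1 _
  · rw [cycleAction_smul_apply, cycleAction_smul_apply, (MulAction.injective g.1).ne_iff,
      add_right_comm]
    exact hC.2 _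

lemma leastPeriod_mul_card_periods (C : ZMod m → V) :
    leastPeriod m C * Nat.card ((MulAction.stabilizer (CycleSymmetry Γ m) C).comap
      (MonoidHom.inr Γ _)) = m := by
  set P := (MulAction.stabilizer (CycleSymmetry Γ m) C).comap (MonoidHom.inr Γ _)
  have hgen : ∀ k, k ∈ Subgroup.zpowers (Multiplicative.ofAdd (1 : ZMod m)) := fun k =>
    ⟨k.toAdd.cast, by simp [← ofAdd_zsmul]⟩
  have hmem (ℓ : ℕ) : (Multiplicative.ofAdd (1 : ZMod m)) ^ ℓ ∈ P ↔ ∀ j, C (j + ℓ) = C j := by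
    rw [← ofAdd_nsmul, nsmul_one, Subgroup.mem_comap, MulAction.mem_stabilizer_iff, funext_iff]
    simp [cycleAction_smul_apply]
  have hindex : P.index = leastPeriod m C := by
    simp only [index_eq_sInf_pow_mem hgen, hmem, leastPeriod]
  rw [← hindex, Subgroup.index_mul_card, Nat.card_eq_of_bijective _ Multiplicative.toAdd.bijective,
    Nat.card_zmod]

lemma mem_map_fst_stabilizer {C : ZMod m → V} {γ : Γ} :
    γ ∈ (MulAction.stabilizer (CycleSymmetry Γ m) C).map (MonoidHom.fst Γ _) ↔
      ∃ p : ZMod m, ∀ j, γ • C j = C (j - p) := by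
  constructor
  · rintro ⟨g, hg, rfl⟩
    refine ⟨g.2.toAdd, fun j => ?_⟩
    simpa [cycleAction_smul_apply] using congrFun hg (j - g.2.toAdd)
  · rintro ⟨p, hp⟩
    refine ⟨(γ, .ofAdd p), funext fun j => ?_, rfl⟩
    simp [cycleAction_smul_apply, hp]

lemma card_smul_apply_zero_mem {F : Set V} (hF : ∀ x : V, ∃! g : Γ, g • x ∈ F)
    (C : ZMod m → V) :
    Nat.card {g : CycleSymmetry Γ m // g • C ∈ {D : ZMod m → V | D 0 ∈ F}} = m := by
  choose γ hγ huniq using hF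
  have hbij : Function.Bijective
      fun g : {g : CycleSymmetry Γ m // g • C ∈ {D : ZMod m → V | D 0 ∈ F}} =>
        g.1.2.toAdd := by
    constructor
    · rintro ⟨⟨g, k⟩, hg⟩ ⟨⟨h, l⟩, hh⟩ (rfl : k = l)
      exact Subtype.ext (Prod.ext ((huniq _ _ hg).trans (huniq _ _ hh).symm) rfl)
    · exact fun k => ⟨⟨(γ (C (0 + k)), .ofAdd k), hγ _⟩, rfl⟩
  rw [Nat.card_eq_of_bijective _ hbij, Nat.card_zmod]

lemma nu_eq_ncard_inter_orbit [NeZero m] {F : Set V} (hF : ∀ x : V, ∃! g : Γ, g • x ∈ F)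
    (C : ZMod m → V) :
    nu Γ m C = ({D | D 0 ∈ F} ∩ MulAction.orbit (CycleSymmetry Γ m) C).ncard := by
  set N := ({D | D 0 ∈ F} ∩ MulAction.orbit (CycleSymmetry Γ m) C).ncard
  set s := Nat.card {γ : Γ | ∃ p : ZMod m, ∀ j, γ • C j = C (j - p)}
  set p := Nat.card ((MulAction.stabilizer (CycleSymmetry Γ m) C).comap (MonoidHom.inr Γ _))
  have hperiod : leastPeriod m C * p = m := leastPeriod_mul_card_periods C
  have horbit : N * (s * p) = m := by
    have hs : s =
        Nat.card ((MulAction.stabilizer (CycleSymmetry Γ m) C).map (MonoidHom.fst Γ _)) :=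
      Nat.card_congr (Equiv.subtypeEquivRight fun _ => mem_map_fst_stabilizer.symm)
    rw [hs, card_map_fst_mul_card_comap_inr, ncard_inter_orbit_mul_card_stabilizer,
      card_smul_apply_zero_mem hF]
  have hne : N * (s * p) ≠ 0 := horbit ▸ NeZero.ne m
  have hlp : leastPeriod m C = N * s :=
    mul_right_cancel₀ (right_ne_zero_of_mul (right_ne_zero_of_mul hne))
      (by rw [hperiod, mul_assoc, horbit])
  rw [nu, hlp, Nat.cast_mul, mul_div_cancel_right₀]
  exact_mod_cast left_ne_zero_of_mul (right_ne_zero_of_mul hne)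

lemma finsum_nu_eq_ncard_reducedPathsFrom [NeZero m]
    (hauto : ∀ (g : Γ) (x y : V), G.Adj (g • x) (g • y) ↔ G.Adj x y)
    {F : Set V} (hF : ∀ x : V, ∃! g : Γ, g • x ∈ F) (hfin : (reducedPathsFrom G m F).Finite) :
    ∑ᶠ c : Quot (cycRel Γ G m), nu Γ m c.out.1 = (reducedPathsFrom G m F).ncard := by
  let cls : reducedPathsFrom G m F → Quot (cycRel Γ G m) := fun D => Quot.mk _ ⟨D.1, D.2.1⟩
  have hfiber (c : Quot (cycRel Γ G m)) :
      nu Γ m c.out.1 = (Nat.card {D // cls D = c} : ℚ) := by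
    have hcls (D) : cls D = c ↔ D.1 ∈ MulAction.orbit (CycleSymmetry Γ m) c.out.1 := by
      rw [← cycRel_iff_mem_orbit (D := ⟨D.1, D.2.1⟩), ← quot_mk_cycRel_eq_iff, Quot.out_eq,
        eq_comm]
    have hinter : {D | D 0 ∈ F} ∩ MulAction.orbit (CycleSymmetry Γ m) c.out.1 =
        reducedPathsFrom G m F ∩ MulAction.orbit (CycleSymmetry Γ m) c.out.1 := by
      ext D
      refine and_congr_left fun ⟨g, hg⟩ => (and_iff_right ?_).symm
      exact hg ▸ c.out.2.smul hauto g
    rw [nu_eq_ncard_inter_orbit hF, hinter, ← Nat.card_coe_set_eq]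
    exact congrArg _ (Nat.card_congr ((Equiv.subtypeEquivRight hcls).trans
      (Equiv.subtypeSubtypeEquivSubtypeInter _ _)).symm)
  have : Finite (reducedPathsFrom G m F) := hfin
  rw [finsum_congr hfiber, finsum_natCard_fiber, Nat.card_coe_set_eq]

end CycleAction

/-- For a periodic simple graph with free `Γ`-action and finite quotient,
`N_m = ∑_{[C]_Γ ∈ [Red_m]_Γ} ν(C)` satisfies `N_m = Tr_Γ(A_m) - t_m`. -/
theorem stmt7 {V : Type*} {Γ : Type*} [Group Γ] [MulAction Γ V]
    (G : SimpleGraph V) (d : ℕ)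
    (hfin : ∀ v, (G.neighborSet v).Finite) (hdeg : ∀ v, (G.neighborSet v).ncard ≤ d)
    (hauto : ∀ (g : Γ) (x y : V), G.Adj (g • x) (g • y) ↔ G.Adj x y)
    (hfree : ∀ (g : Γ) (x : V), g • x = x → g = 1)
    (F : Finset V) (hF : ∀ x : V, ∃! y, y ∈ F ∧ ∃ g : Γ, g • y = x)
    (m : ℕ) (hm : 1 ≤ m) :
    (∑ᶠ c : Quot (cycRel Γ G m), nu Γ m (Quot.out c).1) =
      (∑ x ∈ F, (pathCount G m x x : ℚ)) - (tailCount G F m : ℚ) := by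
  have : NeZero m := ⟨by lia⟩
  rw [finsum_nu_eq_ncard_reducedPathsFrom hauto (existsUnique_smul_mem hfree hF)
    (finite_reducedPathsFrom hfin F), eq_sub_iff_add_eq]
  exact_mod_cast ncard_reducedPathsFrom_add_tailCount hfin F
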